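/- Let p be an odd prime, G = PSL_2(F_p), and U ⊂ G the cyclic subgroup of order p generated by the class of [[1,1],[0,1]]. For characters χ^{(p)}_i of U ≅ Z/p (sending the generator to e^{2πi·i/p}) with i, j ∈ F_p^× distinct, the induced characters satisfy Ind_U^G χ^{(p)}_i = Ind_U^G χ^{(p)}_j if and only if i and j are both squares in F_p^× or both non-squares in F_p^×. -/

import Mathlib

abbrev SL2 (p : ℕ) := Matrix.SpecialLinearGroup (Fin 2) (ZMod p)

/-- `PSL₂(𝔽ₚ)`, the quotient of `SL₂(𝔽ₚ)` by its center `{±I₂}`. -/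
abbrev PSL (p : ℕ) := SL2 p ⧸ Subgroup.center (SL2 p)

open scoped Classical in
/-- The induced character `Ind_H^G χ`, given by the Frobenius formula
`(Ind_H^G χ)(g) = |H|⁻¹ ∑_{x ∈ G} χ°(x⁻¹ g x)`, where `χ°` extends `χ` by zero. -/
noncomputable def indChar {G : Type*} [Group G] [Finite G] (H : Subgroup G) (χ : ↥H → ℂ)
    (g : G) : ℂ :=
  letI : Fintype G := Fintype.ofFinite G
  (Nat.card H : ℂ)⁻¹ * ∑ x : G, if h : x⁻¹ * g * x ∈ H then χ ⟨x⁻¹ * g * x, h⟩ else 0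

/-- The class of `[[1,1],[0,1]]` in `PSL₂(𝔽ₚ)`, a generator of `U ≅ ℤ/p`. -/
def uGen (p : ℕ) : PSL p :=
  QuotientGroup.mk' (Subgroup.center (SL2 p))
    ⟨!![1, 1; 0, 1], by rw [Matrix.det_fin_two_of]; ring⟩

def uSL (p : ℕ) (b : ZMod p) : SL2 p :=
  ⟨!![1, b; 0, 1], by rw [Matrix.det_fin_two_of]; ring⟩

def uP (p : ℕ) (b : ZMod p) : PSL p :=
  QuotientGroup.mk' (Subgroup.center (SL2 p)) (uSL p b)

lemma uSL_coe (p : ℕ) (b : ZMod p) : (uSL p b).1 = !![1, b; 0, 1] := rfl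

lemma uSL_add (p : ℕ) (a b : ZMod p) : uSL p (a + b) = uSL p a * uSL p b := by
  ext r s
  fin_cases r <;> fin_cases s <;> simp [uSL_coe, Matrix.mul_apply, Fin.sum_univ_two, add_comm]

lemma uSL_zero (p : ℕ) : uSL p 0 = 1 := by
  ext r s
  fin_cases r <;> fin_cases s <;> simp [uSL]

lemma uP_add (p : ℕ) (a b : ZMod p) : uP p (a + b) = uP p a * uP p b := by
  simp only [uP, uSL_add, map_mul]

lemma uP_zero (p : ℕ) : uP p 0 = 1 := by
  simp only [uP, uSL_zero, map_one]

lemma uGen_pow (p : ℕ) (n : ℕ) : uGen p ^ n = uP p n := by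
  induction n with
  | zero => simp [uP_zero]
  | succ k ih => rw [pow_succ, ih, Nat.cast_succ, uP_add]; rfl

/-- membership in the class of a unipotent element gives matrix entries -/
lemma mk_eq_uP (p : ℕ) (A : SL2 p) (b : ZMod p)
    (h : QuotientGroup.mk' (Subgroup.center (SL2 p)) A = uP p b) : A.1 1 0 = 0 := by
  unfold uP at h
  have h' := (QuotientGroup.eq (s := Subgroup.center (SL2 p))).1 h.symm
  rw [Matrix.SpecialLinearGroup.mem_center_iff] at h'
  obtain ⟨r, -, hr⟩ := h'
  have hA : A = uSL p b * ((uSL p b)⁻¹ * A) := by group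
  have h2 : A.1 = (uSL p b).1 * Matrix.scalar (Fin 2) r := by
    rw [hr]; exact congrArg Subtype.val hA
  rw [h2]
  simp [uSL, Matrix.mul_apply, Fin.sum_univ_two]

lemma conj_uP (p : ℕ) (M : SL2 p) (h : M.1 1 0 = 0) (t : ZMod p) :
    M⁻¹ * uSL p t * M = uSL p (t * (M.1 1 1) ^ 2) := by
  have hd := M.2
  rw [Matrix.det_fin_two, h] at hd
  have : uSL p t * M = M * uSL p (t * (M.1 1 1) ^ 2) := by
    ext r s
    fin_cases r <;> fin_cases s <;> simp [uSL_coe, Matrix.mul_apply, Fin.sum_univ_two, h]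
    linear_combination (-t * M.1 1 1) * hd
  rw [mul_assoc, this]; group

lemma conj_entry (p : ℕ) (M : SL2 p) (t : ZMod p) :
    (M⁻¹ * uSL p t * M).1 1 0 = - t * (M.1 1 0) ^ 2 := by
  simp [uSL_coe, Matrix.mul_apply, Fin.sum_univ_two, Matrix.adjugate_fin_two]
  ring

lemma sq_of_iff (p : ℕ) [Fact p.Prime] (i j : ZMod p) (hi : i ≠ 0) (hj : j ≠ 0)
    (h : IsSquare i ↔ IsSquare j) : ∃ a : ZMod p, a ≠ 0 ∧ i = a ^ 2 * j := by
  have : IsSquare (i * j) := by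
    by_cases hs : IsSquare i
    · exact hs.mul (h.1 hs)
    · have hs' : ¬ IsSquare j := fun q => hs (h.2 q)
      rw [← quadraticChar_neg_one_iff_not_isSquare] at hs hs'
      rw [← quadraticChar_one_iff_isSquare (mul_ne_zero hi hj), map_mul, hs, hs']; rfl
  obtain ⟨c, hc⟩ := this
  have hc0 : c ≠ 0 := by
    rintro rfl
    exact mul_ne_zero hi hj (by simpa using hc)
  refine ⟨c / j, div_ne_zero hc0 hj, ?_⟩
  field_simp
  linear_combination hc

lemma main_aux (p : ℕ) [Fact p.Prime] (i j : ZMod p) (hi : i ≠ 0) (hj : j ≠ 0)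
    [Fintype (PSL p)] (f : ZMod p → PSL p → ℂ)
    (hf : ∀ k, k = i ∨ k = j → ∀ b, f k (uP p b) = ZMod.stdAddChar (k * b))
    (hf0 : ∀ k, k = i ∨ k = j → ∀ g, (∀ b, g ≠ uP p b) → f k g = 0) :
    (∀ g : PSL p, ∑ x : PSL p, f i (x⁻¹ * g * x) = ∑ x : PSL p, f j (x⁻¹ * g * x)) ↔
      (IsSquare i ↔ IsSquare j) := by
  constructor
  · intro h
    by_contra hns
    have hne : ∀ c : ZMod p, j * c ^ 2 ≠ i := by
      rintro c rfl
      have hc : c ≠ 0 := by rintro rfl; simp at hi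
      apply hns
      constructor
      · intro hs
        have := hs.mul (IsSquare.sq c⁻¹)
        rwa [mul_assoc, ← mul_pow, mul_inv_cancel₀ hc, one_pow, mul_one] at this
      · intro hs
        exact hs.mul (IsSquare.sq c)
    set T : ZMod p → PSL p → ℂ := fun k x =>
      ∑ b : ZMod p, f k (x⁻¹ * uP p b * x) * ZMod.stdAddChar (-(i * b)) with hT
    have hsum : ∑ x, T i x = ∑ x, T j x := by
      simp only [hT]
      refine Finset.sum_comm.trans (Eq.trans ?_ Finset.sum_comm)
      refine Finset.sum_congr rfl fun b _ => ?_
      rw [← Finset.sum_mul, ← Finset.sum_mul, h]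
    have hT1 : ∀ k, k = i ∨ k = j → ∀ M : SL2 p, M.1 1 0 = 0 →
        T k (QuotientGroup.mk' _ M) = if k * (M.1 1 1) ^ 2 - i = 0 then (p : ℂ) else 0 := by
      intro k hk M hM
      have := AddChar.sum_mulShift (R' := ℂ) (k * (M.1 1 1) ^ 2 - i)
        (ZMod.isPrimitive_stdAddChar p)
      rw [ZMod.card] at this
      push_cast at this
      rw [← this]
      simp only [hT]
      refine Finset.sum_congr rfl fun b _ => ?_
      have e : (QuotientGroup.mk' (Subgroup.center (SL2 p)) M)⁻¹ * uP p b *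
          (QuotientGroup.mk' _ M) = uP p (b * (M.1 1 1) ^ 2) := by
        unfold uP
        rw [← conj_uP p M hM, map_mul, map_mul, map_inv]
      rw [e, hf k hk, ← AddChar.map_add_eq_mul]
      congr 1; ring
    have hT2 : ∀ k, k = i ∨ k = j → ∀ M : SL2 p, M.1 1 0 ≠ 0 →
        T k (QuotientGroup.mk' _ M) = 1 := by
      intro k hk M hM
      simp only [hT]
      rw [Finset.sum_eq_single 0]
      · have := hf k hk 0
        rw [uP_zero] at *
        simp [this]
      · intro b _ hb
        rw [hf0 k hk, zero_mul]
        intro c hc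
        have e : (QuotientGroup.mk' (Subgroup.center (SL2 p)) M)⁻¹ * uP p b *
          (QuotientGroup.mk' _ M) = QuotientGroup.mk' _ (M⁻¹ * uSL p b * M) := by
          unfold uP
          rw [map_mul, map_mul, map_inv]
        rw [e] at hc
        have := mk_eq_uP p _ _ hc
        rw [conj_entry] at this
        simp_all
      · simp
    have hre : ∑ x, (T i x).re = ∑ x, (T j x).re := by
      simpa using congrArg Complex.re hsum
    have hp0 : (0 : ℝ) < p := by exact_mod_cast (Fact.out : p.Prime).pos
    have hlt : ∑ x, (T j x).re < ∑ x, (T i x).re := by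
      apply Finset.sum_lt_sum
      · intro x _
        obtain ⟨M, rfl⟩ := QuotientGroup.mk'_surjective _ x
        by_cases hM : M.1 1 0 = 0
        · rw [hT1 i (Or.inl rfl) M hM, hT1 j (Or.inr rfl) M hM,
            if_neg (sub_ne_zero.2 (hne _))]
          split_ifs <;> simp
        · rw [hT2 i (Or.inl rfl) M hM, hT2 j (Or.inr rfl) M hM]
      · refine ⟨QuotientGroup.mk' _ 1, Finset.mem_univ _, ?_⟩
        rw [hT1 i (Or.inl rfl) 1 (by simp), hT1 j (Or.inr rfl) 1 (by simp),
            if_neg (sub_ne_zero.2 (hne _)), if_pos (by simp)]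
        simpa using hp0
    exact hlt.ne' hre
  · intro h g
    obtain ⟨a, ha, hia⟩ := sq_of_iff p i j hi hj h
    let D : SL2 p := ⟨!![a⁻¹, 0; 0, a], by
      rw [Matrix.det_fin_two_of, inv_mul_cancel₀ ha]; ring⟩
    let d : PSL p := QuotientGroup.mk' _ D
    have hconj : ∀ b, d⁻¹ * uP p b * d = uP p (b * a ^ 2) := by
      intro b
      have := conj_uP p D (by simp [D]) b
      have h2 := congrArg (QuotientGroup.mk' (Subgroup.center (SL2 p))) this
      rw [map_mul, map_mul, map_inv] at h2
      exact h2
    have hfd : ∀ y, f i y = f j (d⁻¹ * y * d) := by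
      intro y
      by_cases hy : ∃ b, y = uP p b
      · obtain ⟨b, rfl⟩ := hy
        rw [hconj, hf i (Or.inl rfl), hf j (Or.inr rfl), hia]
        congr 1; ring
      · push Not at hy
        rw [hf0 i (Or.inl rfl) y hy, hf0 j (Or.inr rfl)]
        intro b hb
        apply hy (b * (a⁻¹) ^ 2)
        have h3 := hconj (b * (a⁻¹) ^ 2)
        rw [mul_assoc b, ← mul_pow, inv_mul_cancel₀ ha, one_pow, mul_one, ← hb] at h3
        exact (mul_left_cancel (mul_right_cancel h3)).symm
    rw [← Equiv.sum_comp (Equiv.mulRight d) (fun x => f j (x⁻¹ * g * x))]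
    refine Finset.sum_congr rfl fun x _ => ?_
    rw [hfd]
    simp [mul_assoc]

theorem stmt16 (p : ℕ) [Fact p.Prime] (hp : Odd p) (i j : ZMod p) (hi : i ≠ 0) (hj : j ≠ 0)
    (hij : i ≠ j) (U : Subgroup (PSL p)) (hU : U = Subgroup.zpowers (uGen p))
    (χi χj : ↥U → ℂ)
    (hχi : ∀ (x : ↥U) (n : ℕ), (x : PSL p) = uGen p ^ n →
      χi x = Complex.exp (2 * Real.pi * Complex.I * (i.val * n) / p))
    (hχj : ∀ (x : ↥U) (n : ℕ), (x : PSL p) = uGen p ^ n →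
      χj x = Complex.exp (2 * Real.pi * Complex.I * (j.val * n) / p)) :
    (∀ g : PSL p, indChar U χi g = indChar U χj g) ↔ (IsSquare i ↔ IsSquare j) := by
  classical
  let _ : Fintype (PSL p) := Fintype.ofFinite _
  have hmem : ∀ b, uP p b ∈ U := by
    intro b
    rw [hU, ← ZMod.natCast_zmod_val b, ← uGen_pow]
    exact Subgroup.npow_mem_zpowers _ _
  have hmem' : ∀ g ∈ U, ∃ b, g = uP p b := by
    intro g hg
    rw [hU, ← mem_powers_iff_mem_zpowers] at hg
    obtain ⟨n, rfl⟩ := hg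
    exact ⟨n, uGen_pow p n⟩
  have hval : ∀ (k : ZMod p) (χ : ↥U → ℂ), (∀ (x : ↥U) (n : ℕ), (x : PSL p) = uGen p ^ n →
      χ x = Complex.exp (2 * Real.pi * Complex.I * (k.val * n) / p)) →
      ∀ b, χ ⟨uP p b, hmem b⟩ = ZMod.stdAddChar (k * b) := by
    intro k χ hχ b
    rw [hχ _ b.val (by rw [uGen_pow, ZMod.natCast_zmod_val])]
    have := ZMod.stdAddChar_coe (N := p) ((k.val * b.val : ℕ) : ℤ)
    push_cast at this
    rw [ZMod.natCast_zmod_val, ZMod.natCast_zmod_val] at this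
    rw [this]
  let f : ZMod p → PSL p → ℂ := fun k g =>
    if h : g ∈ U then (if k = i then χi ⟨g, h⟩ else χj ⟨g, h⟩) else 0
  have key := main_aux p i j hi hj f (by
    rintro k (rfl | rfl) b
    · simp only [f, dif_pos (hmem b), if_true]
      exact hval _ _ hχi b
    · simp only [f, dif_pos (hmem b), if_neg hij.symm]
      exact hval _ _ hχj b) (by
    intro k _ g hg
    have : g ∉ U := fun h => by
      obtain ⟨b, hb⟩ := hmem' g h
      exact hg b hb
    simp only [f, dif_neg this])
  rw [← key]
  refine forall_congr' fun g => ?_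
  have hU0 : ((Nat.card U : ℂ))⁻¹ ≠ 0 :=
    inv_ne_zero (by exact_mod_cast Nat.card_pos.ne')
  have e1 : indChar U χi g = (Nat.card U : ℂ)⁻¹ * ∑ x : PSL p, f i (x⁻¹ * g * x) := by
    simp only [indChar, f, if_true]
  have e2 : indChar U χj g = (Nat.card U : ℂ)⁻¹ * ∑ x : PSL p, f j (x⁻¹ * g * x) := by
    simp only [indChar, f, if_neg hij.symm]
  rw [e1, e2, mul_right_inj' hU0]
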